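/- Let X be a real Banach space that is 2-convex and 2-smooth, and let M, N be closed linear subspaces of X such that M + N is closed. Then for every x ∈ X, the sequence defined by x₀ = x, x_{2n+1} = (I − P_M)x_{2n}, x_{2n} = (I − P_N)x_{2n−1} converges to (I − P_{M+N})x, and there exist constants C > 0 and q ∈ (0,1) such that ‖(I − P_{M+N})x − x_n‖ ≤ C q^n for all n; that is, the convergence is linear. -/

import Mathlib

open Filter Topology

noncomputable section

/-- The modulus of convexity of a normed space `X`. -/
def modConvex (X : Type*) [NormedAddCommGroup X] (ε : ℝ) : ℝ :=
  sInf {d : ℝ | ∃ x y : X, ‖x‖ = 1 ∧ ‖y‖ = 1 ∧ ε ≤ ‖x - y‖ ∧ d = 1 - ‖x + y‖ / 2}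

/-- The modulus of smoothness of a normed space `X`. -/
def modSmooth (X : Type*) [NormedAddCommGroup X] [NormedSpace ℝ X] (τ : ℝ) : ℝ :=
  sSup {d : ℝ | ∃ x y : X, ‖x‖ = 1 ∧ ‖y‖ = 1 ∧ d = (‖x + τ • y‖ + ‖x - τ • y‖) / 2 - 1}

/-- `X` is uniformly convex: the modulus of convexity is positive for positive ε. -/
def UnifConvex (X : Type*) [NormedAddCommGroup X] : Prop :=
  ∀ ε : ℝ, 0 < ε → ε ≤ 2 → 0 < modConvex X ε

/-- `X` is uniformly smooth: `ρ_X(τ)/τ → 0` as `τ → 0⁺`. -/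
def UnifSmooth (X : Type*) [NormedAddCommGroup X] [NormedSpace ℝ X] : Prop :=
  Tendsto (fun τ => modSmooth X τ / τ) (𝓝[>] (0 : ℝ)) (𝓝 0)

/-- `X` is uniformly convex of power type `ρ`. -/
def PowerConvex (X : Type*) [NormedAddCommGroup X] (ρ : ℝ) : Prop :=
  ∃ c > (0 : ℝ), ∀ ε ∈ Set.Icc (0 : ℝ) 2, c * ε ^ ρ ≤ modConvex X ε

/-- `X` is uniformly smooth of power type `σ` (with `σ > 1`). -/
def PowerSmooth (X : Type*) [NormedAddCommGroup X] [NormedSpace ℝ X] (σ : ℝ) : Prop :=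
  1 < σ ∧ ∃ C > (0 : ℝ), ∀ τ ∈ Set.Icc (0 : ℝ) 1, modSmooth X τ ≤ C * τ ^ σ

variable {X : Type*} [NormedAddCommGroup X] [NormedSpace ℝ X]

/-- The duality mapping `j_p`, the Fréchet derivative of `x ↦ (1/p)‖x‖^p`. -/
def dualityMap (p : ℝ) (x : X) : X →L[ℝ] ℝ :=
  fderiv ℝ (fun y : X => 1 / p * ‖y‖ ^ p) x

/-- The Bregman distance `D_p(x, y)`. -/
def bregmanDist (p : ℝ) (x y : X) : ℝ :=
  1 / p * ‖x‖ ^ p - 1 / p * ‖y‖ ^ p - dualityMap p y (x - y)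

/-- The Bregman projection of `x` onto the set `S`: the minimizer of `m ↦ D_p(m, x)` over `S`. -/
def bregmanProj (p : ℝ) (S : Set X) (x : X) : X :=
  letI : Nonempty X := ⟨x⟩
  Classical.epsilon fun y => y ∈ S ∧ ∀ m ∈ S, bregmanDist p y x ≤ bregmanDist p m x

/-- The Bregman distance `D_p(S, x)` from the point `x` to the set `S`. -/
def bregmanDistSet (p : ℝ) (S : Set X) (x : X) : ℝ :=
  bregmanDist p (bregmanProj p S x) x

/-- The metric projection of `x` onto the set `S`: the point of `S` nearest to `x`. -/
def metricProj (S : Set X) (x : X) : X :=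
  letI : Nonempty X := ⟨x⟩
  Classical.epsilon fun y => y ∈ S ∧ ∀ m ∈ S, ‖x - y‖ ≤ ‖x - m‖

/-!
Write `z` for the element of least norm in `x + (M + N)`. Power type 2 of the two moduli amounts to
a pair of one-sided parallelogram inequalities. The lower one bounds `‖xₙ - z‖²` by a multiple of
the energy gap `‖xₙ‖² - ‖z‖²`, so it suffices that each step multiplies the gap by a factor at most
`q < 1`. As `M + N` is closed, the open mapping theorem gives `z - xₙ = m + w` with `m ∈ M`,
`w ∈ N` of norm `O(‖z - xₙ‖)`. If `xₙ` is Birkhoff orthogonal to `N`, moving from `xₙ` by `-2tw`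
costs only `O(t²‖w‖²)` by the upper inequality, whereas moving by `2t(z - xₙ)` gains a fraction `2t`
of the gap by convexity. The midpoint of the two is `xₙ + tm`, a competitor in the projection onto
`M`; a small `t` makes the linear gain win.
-/

section Parallelogram

/-- The lower parallelogram inequality with constant `k`: the quantitative form of 2-convexity. -/
def LowerParallelogram (X : Type*) [NormedAddCommGroup X] (k : ℝ) : Prop :=
  ∀ x y : X, ‖x + y‖ ^ 2 + k * ‖x - y‖ ^ 2 ≤ 2 * ‖x‖ ^ 2 + 2 * ‖y‖ ^ 2

/-- The upper parallelogram inequality with constant `C`: the quantitative form of 2-smoothness. -/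
def UpperParallelogram (X : Type*) [NormedAddCommGroup X] (C : ℝ) : Prop :=
  ∀ x y : X, ‖x + y‖ ^ 2 + ‖x - y‖ ^ 2 ≤ 2 * ‖x‖ ^ 2 + C * ‖y‖ ^ 2

theorem modConvex_le {E : Type*} [NormedAddCommGroup E] {u v : E} {ε : ℝ}
    (hu : ‖u‖ = 1) (hv : ‖v‖ = 1) (hε : ε ≤ ‖u - v‖) : modConvex E ε ≤ 1 - ‖u + v‖ / 2 := by
  refine csInf_le ⟨0, ?_⟩ ⟨u, v, hu, hv, hε, rfl⟩
  rintro _ ⟨x, y, hx, hy, -, rfl⟩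
  linarith [norm_add_le x y]

theorem le_modSmooth {u v : X} (hu : ‖u‖ = 1) (hv : ‖v‖ = 1) (τ : ℝ) :
    (‖u + τ • v‖ + ‖u - τ • v‖) / 2 - 1 ≤ modSmooth X τ := by
  refine le_csSup ⟨|τ|, ?_⟩ ⟨u, v, hu, hv, rfl⟩
  rintro _ ⟨x, y, hx, hy, rfl⟩
  have hy' : ‖τ • y‖ = |τ| := by rw [norm_smul, hy, mul_one, Real.norm_eq_abs]
  linarith [norm_add_le x (τ • y), norm_sub_le x (τ • y)]

theorem norm_smul_add_smul_le {a b : ℝ} (hb : 0 ≤ b) (hab : b ≤ a) (u v : X) :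
    ‖a • u + b • v‖ ≤ (a - b) * ‖u‖ + b * ‖u + v‖ :=
  calc ‖a • u + b • v‖ = ‖(a - b) • u + b • (u + v)‖ := by congr 1; module
    _ ≤ ‖(a - b) • u‖ + ‖b • (u + v)‖ := norm_add_le _ _
    _ = (a - b) * ‖u‖ + b * ‖u + v‖ := by
      rw [norm_smul_of_nonneg (sub_nonneg.2 hab), norm_smul_of_nonneg hb]

theorem norm_smul_add_smul_sq_le {a b δ : ℝ} (hb : 0 ≤ b) (hab : b ≤ a) (hδ : 0 ≤ δ) {u v : X}
    (hu : ‖u‖ = 1) (hv : ‖v‖ = 1) (huv : ‖u + v‖ ≤ 2 - δ) :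
    ‖a • u + b • v‖ ^ 2 ≤ (a + b) ^ 2 - δ * b ^ 2 := by
  have ha : 0 ≤ a := hb.trans hab
  have h_triangle : ‖a • u + b • v‖ ≤ a + b := by
    simpa only [norm_smul_of_nonneg ha, norm_smul_of_nonneg hb, hu, hv, mul_one]
      using norm_add_le (a • u) (b • v)
  have h_deficit : ‖a • u + b • v‖ ≤ a + b - δ * b := by
    have h_split := norm_smul_add_smul_le hb hab u v
    rw [hu] at h_split
    nlinarith
  calc ‖a • u + b • v‖ ^ 2 ≤ (a + b) * (a + b - δ * b) := by rw [sq]; gcongr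
    _ = (a + b) ^ 2 - δ * b ^ 2 - δ * a * b := by ring
    _ ≤ (a + b) ^ 2 - δ * b ^ 2 := sub_le_self _ (by positivity)

theorem norm_smul_sub_smul_sq_le {a b : ℝ} (hb : 0 ≤ b) (hab : b ≤ a) {u : X} (hu : ‖u‖ = 1)
    (v : X) : ‖a • u - b • v‖ ^ 2 ≤ 2 * ((a - b) ^ 2 + (b * ‖u - v‖) ^ 2) := by
  have h_split := norm_smul_add_smul_le hb hab u (-v)
  rw [smul_neg, hu, mul_one, ← sub_eq_add_neg, ← sub_eq_add_neg] at h_split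
  exact (pow_le_pow_left₀ (norm_nonneg _) h_split 2).trans add_sq_le

theorem lowerParallelogram_of_unit {c : ℝ} (hc : 0 ≤ c)
    (h : ∀ u v : X, ‖u‖ = 1 → ‖v‖ = 1 → ‖u + v‖ ≤ 2 - 2 * c * ‖u - v‖ ^ 2) :
    LowerParallelogram X (min (1 / 2) c) := by
  intro x y
  wlog hyx : ‖y‖ ≤ ‖x‖ generalizing x y
  · have := this y x (le_of_not_ge hyx)
    rw [add_comm y, norm_sub_rev y] at this
    linarith
  have hk_half : min (1 / 2) c ≤ 1 / 2 := min_le_left _ _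
  rcases eq_or_ne y 0 with rfl | hy
  · simp only [add_zero, sub_zero, norm_zero]
    nlinarith [sq_nonneg ‖x‖]
  have hx : x ≠ 0 := norm_pos_iff.1 ((norm_pos_iff.2 hy).trans_le hyx)
  have hu : ‖NormedSpace.normalize x‖ = 1 := NormedSpace.norm_normalize_eq_one_iff.2 hx
  have hv : ‖NormedSpace.normalize y‖ = 1 := NormedSpace.norm_normalize_eq_one_iff.2 hy
  have h_add := norm_smul_add_smul_sq_le (norm_nonneg y) hyx (by positivity) hu hv (h _ _ hu hv)
  have h_sub := norm_smul_sub_smul_sq_le (norm_nonneg y) hyx hu (NormedSpace.normalize y)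
  rw [NormedSpace.norm_smul_normalize, NormedSpace.norm_smul_normalize] at h_add h_sub
  set a := ‖x‖
  set b := ‖y‖
  set d := ‖NormedSpace.normalize x - NormedSpace.normalize y‖
  have h_sub' : min (1 / 2) c * ‖x - y‖ ^ 2 ≤ (a - b) ^ 2 + 2 * c * (b * d) ^ 2 :=
    calc min (1 / 2) c * ‖x - y‖ ^ 2
        ≤ min (1 / 2) c * (2 * ((a - b) ^ 2 + (b * d) ^ 2)) := by gcongr
      _ = 2 * (min (1 / 2) c * (a - b) ^ 2) + 2 * (min (1 / 2) c * (b * d) ^ 2) := by ring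
      _ ≤ 2 * (1 / 2 * (a - b) ^ 2) + 2 * (c * (b * d) ^ 2) := by
          gcongr; exact min_le_right _ _
      _ = (a - b) ^ 2 + 2 * c * (b * d) ^ 2 := by ring
  linarith

theorem PowerConvex.exists_lowerParallelogram (h : PowerConvex X 2) :
    ∃ k > 0, LowerParallelogram X k := by
  obtain ⟨c, hc, h⟩ := h
  refine ⟨min (1 / 2) c, by positivity, lowerParallelogram_of_unit hc.le fun u v hu hv => ?_⟩
  have h_two : ‖u - v‖ ≤ 2 := by linarith [norm_sub_le u v]
  have h_mod := h ‖u - v‖ ⟨norm_nonneg _, h_two⟩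
  rw [Real.rpow_two] at h_mod
  linarith [modConvex_le hu hv le_rfl]

theorem norm_add_sq_add_norm_sub_sq_le (x y : X) :
    ‖x + y‖ ^ 2 + ‖x - y‖ ^ 2 ≤ (‖x + y‖ + ‖x - y‖) ^ 2 / 2 + 2 * ‖y‖ ^ 2 := by
  have h_diff : |‖x + y‖ - ‖x - y‖| ≤ 2 * ‖y‖ :=
    calc |‖x + y‖ - ‖x - y‖| ≤ ‖(x + y) - (x - y)‖ := abs_norm_sub_norm_le _ _
      _ = ‖(2 : ℝ) • y‖ := by congr 1; module
      _ = 2 * ‖y‖ := norm_smul_of_nonneg zero_le_two y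
  nlinarith [sq_le_sq' (abs_le.1 h_diff).1 (abs_le.1 h_diff).2]

theorem norm_add_sq_add_norm_sub_sq_le_of_norm_le {E : Type*} [SeminormedAddCommGroup E]
    {x y : E} (hxy : ‖x‖ ≤ ‖y‖) : ‖x + y‖ ^ 2 + ‖x - y‖ ^ 2 ≤ 2 * ‖x‖ ^ 2 + 6 * ‖y‖ ^ 2 :=
  calc ‖x + y‖ ^ 2 + ‖x - y‖ ^ 2 ≤ (‖x‖ + ‖y‖) ^ 2 + (‖x‖ + ‖y‖) ^ 2 := by
        gcongr
        exacts [norm_add_le x y, norm_sub_le x y]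
    _ ≤ 2 * ‖x‖ ^ 2 + 6 * ‖y‖ ^ 2 := by nlinarith [norm_nonneg x]

theorem upperParallelogram_of_unit {C : ℝ} (hC : 0 ≤ C)
    (h : ∀ u v : X, ‖u‖ = 1 → ‖v‖ = 1 → ∀ τ ∈ Set.Icc (0 : ℝ) 1,
      ‖u + τ • v‖ + ‖u - τ • v‖ ≤ 2 + 2 * C * τ ^ 2) :
    UpperParallelogram X (4 * C + 2 * C ^ 2 + 6) := by
  intro x y
  have hC_term : 0 ≤ (4 * C + 2 * C ^ 2) * ‖y‖ ^ 2 := by positivity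
  rcases le_or_gt ‖x‖ ‖y‖ with hxy | hyx
  · linarith [norm_add_sq_add_norm_sub_sq_le_of_norm_le hxy]
  rcases eq_or_ne y 0 with rfl | hy
  · simp only [add_zero, sub_zero, norm_zero]
    linarith
  have hx_pos : 0 < ‖x‖ := (norm_nonneg y).trans_lt hyx
  have hx_eq := NormedSpace.norm_smul_normalize x
  have hy_eq := NormedSpace.norm_smul_normalize y
  have h_unit := h _ _ (NormedSpace.norm_normalize_eq_one_iff.2 (norm_pos_iff.1 hx_pos))
    (NormedSpace.norm_normalize_eq_one_iff.2 hy)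
  set a := ‖x‖
  set u := NormedSpace.normalize x
  set v := NormedSpace.normalize y
  obtain ⟨τ, hτ_eq⟩ : ∃ τ, a * τ = ‖y‖ := ⟨‖y‖ / a, mul_div_cancel₀ _ hx_pos.ne'⟩
  have hτ : τ ∈ Set.Icc (0 : ℝ) 1 :=
    ⟨by nlinarith [norm_nonneg y], by nlinarith⟩
  have h_sum : ‖x + y‖ + ‖x - y‖ ≤ a * (2 + 2 * C * τ ^ 2) := by
    have hy_smul : y = a • τ • v := by rw [smul_smul, hτ_eq, hy_eq]
    rw [hy_smul, ← hx_eq, ← smul_add, ← smul_sub, norm_smul_of_nonneg hx_pos.le,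
      norm_smul_of_nonneg hx_pos.le, ← mul_add]
    exact mul_le_mul_of_nonneg_left (h_unit τ hτ) hx_pos.le
  have hτ_four : τ ^ 4 ≤ τ ^ 2 := pow_le_pow_of_le_one hτ.1 hτ.2 (by norm_num)
  calc ‖x + y‖ ^ 2 + ‖x - y‖ ^ 2
      ≤ (a * (2 + 2 * C * τ ^ 2)) ^ 2 / 2 + 2 * ‖y‖ ^ 2 := by
        refine (norm_add_sq_add_norm_sub_sq_le x y).trans ?_; gcongr
    _ = a ^ 2 * (2 + 4 * C * τ ^ 2 + 2 * C ^ 2 * τ ^ 4) + 2 * ‖y‖ ^ 2 := by ring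
    _ ≤ a ^ 2 * (2 + 4 * C * τ ^ 2 + 2 * C ^ 2 * τ ^ 2) + 2 * ‖y‖ ^ 2 := by gcongr
    _ = 2 * a ^ 2 + (4 * C + 2 * C ^ 2 + 2) * ‖y‖ ^ 2 := by rw [← hτ_eq]; ring
    _ ≤ 2 * a ^ 2 + (4 * C + 2 * C ^ 2 + 6) * ‖y‖ ^ 2 := by gcongr; norm_num

theorem PowerSmooth.exists_upperParallelogram (h : PowerSmooth X 2) :
    ∃ C ≥ 0, UpperParallelogram X C := by
  obtain ⟨-, C, hC, h⟩ := h
  refine ⟨4 * C + 2 * C ^ 2 + 6, by positivity,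
    upperParallelogram_of_unit hC.le fun u v hu hv τ hτ => ?_⟩
  have h_mod := h τ hτ
  rw [Real.rpow_two] at h_mod
  linarith [le_modSmooth hu hv τ]

theorem LowerParallelogram.mul_norm_sub_sq_le {k : ℝ} (h : LowerParallelogram X k) (x y : X) :
    k * ‖x - y‖ ^ 2 ≤ 2 * ‖x‖ ^ 2 + 2 * ‖y‖ ^ 2 - 4 * ‖midpoint ℝ x y‖ ^ 2 := by
  have h_mid : ‖x + y‖ = 2 * ‖midpoint ℝ x y‖ := by
    rw [← norm_smul_of_nonneg zero_le_two, two_smul, midpoint_add_self]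
  have hxy := h x y
  rw [h_mid] at hxy
  linarith

end Parallelogram

section NearestPoint

theorem exists_seq_tendsto_infDist {E : Type*} [PseudoMetricSpace E] {K : Set E}
    (hK : K.Nonempty) (x : E) :
    ∃ y : ℕ → E, (∀ n, y n ∈ K) ∧
      Tendsto (fun n => dist x (y n)) atTop (𝓝 (Metric.infDist x K)) := by
  have := hK.to_subtype
  obtain ⟨r, -, hr, hr_mem⟩ := exists_seq_tendsto_sInf
    (Set.range_nonempty fun y : K => dist x y) ⟨0, by rintro _ ⟨y, rfl⟩; exact dist_nonneg⟩
  choose y hy using hr_mem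
  refine ⟨fun n => y n, fun n => (y n).2, ?_⟩
  simp only [hy, Metric.infDist_eq_iInf]
  exact hr

theorem LowerParallelogram.mul_dist_sq_le {k : ℝ} (h : LowerParallelogram X k) {K : Set X}
    (hK : Convex ℝ K) (x : X) {y z : X} (hy : y ∈ K) (hz : z ∈ K) :
    k * dist y z ^ 2 ≤ 2 * dist x y ^ 2 + 2 * dist x z ^ 2 - 4 * Metric.infDist x K ^ 2 := by
  have h_mid : Metric.infDist x K ≤ ‖midpoint ℝ (x - y) (x - z)‖ := by
    have h_eq : x - midpoint ℝ y z = midpoint ℝ (x - y) (x - z) := by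
      simpa only [midpoint_self, vsub_eq_sub] using midpoint_vsub_midpoint (R := ℝ) x x y z
    rw [← h_eq, ← dist_eq_norm]
    exact Metric.infDist_le_dist_of_mem (hK.midpoint_mem hy hz)
  have h_norm := h.mul_norm_sub_sq_le (x - y) (x - z)
  rw [sub_sub_sub_cancel_left, norm_sub_rev] at h_norm
  simp only [dist_eq_norm]
  linarith [pow_le_pow_left₀ Metric.infDist_nonneg h_mid 2]

theorem LowerParallelogram.cauchySeq_of_tendsto_infDist {k : ℝ} (hk : 0 < k)
    (h : LowerParallelogram X k) {K : Set X} (hK : Convex ℝ K) {x : X} {y : ℕ → X}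
    (hy_mem : ∀ n, y n ∈ K)
    (hy : Tendsto (fun n => dist x (y n)) atTop (𝓝 (Metric.infDist x K))) : CauchySeq y := by
  set d := Metric.infDist x K
  let bound (p : ℕ × ℕ) : ℝ :=
    √((2 * dist x (y p.1) ^ 2 + 2 * dist x (y p.2) ^ 2 - 4 * d ^ 2) / k)
  have h_bound : Tendsto bound atTop (𝓝 0) := by
    rw [← prod_atTop_atTop_eq]
    have h_lim := (((((hy.comp tendsto_fst).pow 2).const_mul 2).add
      (((hy.comp tendsto_snd).pow 2).const_mul 2)).sub_const (4 * d ^ 2)).div_const k |>.sqrt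
    rwa [show 2 * d ^ 2 + 2 * d ^ 2 - 4 * d ^ 2 = 0 by ring, zero_div, Real.sqrt_zero] at h_lim
  refine cauchySeq_iff_tendsto_dist_atTop_0.2
    (squeeze_zero (fun _ => dist_nonneg) (fun p => Real.le_sqrt_of_sq_le ?_) h_bound)
  rw [le_div_iff₀' hk]
  exact h.mul_dist_sq_le hK x (hy_mem p.1) (hy_mem p.2)

theorem LowerParallelogram.exists_forall_norm_sub_le {k : ℝ} (hk : 0 < k)
    (h : LowerParallelogram X k) {K : Set X} (hK_ne : K.Nonempty) (hK_complete : IsComplete K)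
    (hK_convex : Convex ℝ K) (x : X) : ∃ y ∈ K, ∀ m ∈ K, ‖x - y‖ ≤ ‖x - m‖ := by
  obtain ⟨y, hy_mem, hy⟩ := exists_seq_tendsto_infDist hK_ne x
  obtain ⟨z, hz_mem, hz⟩ := cauchySeq_tendsto_of_isComplete hK_complete hy_mem
    (h.cauchySeq_of_tendsto_infDist hk hK_convex hy_mem hy)
  have h_dist : dist x z = Metric.infDist x K := tendsto_nhds_unique (tendsto_const_nhds.dist hz) hy
  refine ⟨z, hz_mem, fun m hm => ?_⟩
  rw [← dist_eq_norm, ← dist_eq_norm, h_dist]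
  exact Metric.infDist_le_dist_of_mem hm

end NearestPoint

section Residual

/-- `x` is Birkhoff orthogonal to the subspace `S`: no translate by an element of `S` has smaller
norm. -/
def BirkhoffOrthogonal (x : X) (S : Submodule ℝ X) : Prop :=
  ∀ w ∈ S, ‖x‖ ≤ ‖x + w‖

/-- `y` is a residual `(I - P_S) x`, that is, an element of least norm in the coset `x + S`. It is
stated as a relation so that neither existence nor uniqueness of nearest points is presupposed. -/
structure IsResidual (S : Submodule ℝ X) (x y : X) : Prop where
  sub_mem : y - x ∈ S
  birkhoffOrthogonal : BirkhoffOrthogonal y S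

variable {S : Submodule ℝ X} {x y z : X}

theorem IsResidual.norm_le_norm_add (h : IsResidual S x y) {w : X} (hw : w ∈ S) :
    ‖y‖ ≤ ‖x + w‖ := by
  have := h.birkhoffOrthogonal _ (S.sub_mem hw h.sub_mem)
  rwa [show y + (w - (y - x)) = x + w by abel] at this

theorem IsResidual.of_sub_mem (h : IsResidual S x z) (hyx : y - x ∈ S) : IsResidual S y z :=
  ⟨by simpa only [sub_sub_sub_cancel_right] using S.sub_mem h.sub_mem hyx, h.birkhoffOrthogonal⟩

theorem LowerParallelogram.isResidual_sub_metricProj {k : ℝ} (hk : 0 < k)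
    (h : LowerParallelogram X k) (hS : IsComplete (S : Set X)) (x : X) :
    IsResidual S x (x - metricProj (S : Set X) x) := by
  obtain ⟨h_mem, h_le⟩ : metricProj (S : Set X) x ∈ (S : Set X) ∧
      ∀ m ∈ (S : Set X), ‖x - metricProj (S : Set X) x‖ ≤ ‖x - m‖ :=
    Classical.epsilon_spec (h.exists_forall_norm_sub_le hk ⟨0, S.zero_mem⟩ hS S.convex x)
  refine ⟨by simpa only [sub_sub_cancel_left] using S.neg_mem h_mem, fun w hw => ?_⟩
  simpa only [sub_add] using h_le _ (S.sub_mem h_mem hw)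

theorem LowerParallelogram.mul_norm_sub_sq_le_of_isResidual {k : ℝ} (h : LowerParallelogram X k)
    (hz : IsResidual S x z) : k * ‖z - x‖ ^ 2 ≤ 2 * (‖x‖ ^ 2 - ‖z‖ ^ 2) := by
  have h_mid : ‖z‖ ≤ ‖midpoint ℝ z x‖ := by
    have := hz.norm_le_norm_add (S.smul_mem (⅟2 : ℝ) hz.sub_mem)
    rwa [midpoint_comm, midpoint, AffineMap.lineMap_apply_module', add_comm]
  linarith [h.mul_norm_sub_sq_le z x, pow_le_pow_left₀ (norm_nonneg z) h_mid 2]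

end Residual

section BoundedDecomposition

/-- Every element of `M ⊔ N` splits into summands from `M` and `N` whose norms are at most `K` times
its own: the quantitative form in which the closedness of `M + N` enters. -/
def BoundedDecomposition {𝕜 E : Type*} [Ring 𝕜] [NormedAddCommGroup E] [Module 𝕜 E]
    (M N : Submodule 𝕜 E) (K : ℝ) : Prop :=
  ∀ w ∈ M ⊔ N, ∃ m ∈ M, ∃ n ∈ N, m + n = w ∧ ‖m‖ ≤ K * ‖w‖ ∧ ‖n‖ ≤ K * ‖w‖

theorem BoundedDecomposition.symm {𝕜 E : Type*} [Ring 𝕜] [NormedAddCommGroup E] [Module 𝕜 E]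
    {M N : Submodule 𝕜 E} {K : ℝ} (h : BoundedDecomposition M N K) :
    BoundedDecomposition N M K := by
  intro w hw
  obtain ⟨m, hm, n, hn, rfl, hmK, hnK⟩ := h w (sup_comm M N ▸ hw)
  exact ⟨n, hn, m, hm, add_comm n m, hnK, hmK⟩

theorem exists_boundedDecomposition {𝕜 E : Type*} [NontriviallyNormedField 𝕜]
    [NormedAddCommGroup E] [NormedSpace 𝕜 E] {M N : Submodule 𝕜 E}
    (hM : IsComplete (M : Set E)) (hN : IsComplete (N : Set E))
    (hMN : IsComplete ((M ⊔ N : Submodule 𝕜 E) : Set E)) : ∃ K, BoundedDecomposition M N K := by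
  have := hM.completeSpace_coe
  have := hN.completeSpace_coe
  have := hMN.completeSpace_coe
  let sumMap : (M × N) →L[𝕜] (M ⊔ N : Submodule 𝕜 E) :=
    (M.subtypeL.coprod N.subtypeL).codRestrict _ fun p => Submodule.add_mem_sup p.1.2 p.2.2
  have h_surj : Function.Surjective sumMap := by
    rintro ⟨_, hw⟩
    obtain ⟨m, hm, n, hn, rfl⟩ := Submodule.mem_sup.1 hw
    exact ⟨(⟨m, hm⟩, ⟨n, hn⟩), rfl⟩
  obtain ⟨K, -, hK⟩ := sumMap.exists_preimage_norm_le h_surj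
  refine ⟨K, fun w hw => ?_⟩
  obtain ⟨⟨m, n⟩, h_sum, h_le⟩ := hK ⟨w, hw⟩
  exact ⟨m, m.2, n, n.2, congrArg Subtype.val h_sum, (norm_fst_le (m, n)).trans h_le,
    (norm_snd_le (m, n)).trans h_le⟩

end BoundedDecomposition

section Contraction

variable {k C K t : ℝ} {M N : Submodule ℝ X} {x x' z : X}

theorem convexOn_univ_norm_sq : ConvexOn ℝ Set.univ fun x : X => ‖x‖ ^ 2 :=
  convexOn_univ_norm.pow (fun _ _ => norm_nonneg _) 2

theorem UpperParallelogram.norm_sub_sq_le (h : UpperParallelogram X C)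
    (hx : BirkhoffOrthogonal x N) {n : X} (hn : n ∈ N) :
    ‖x - n‖ ^ 2 ≤ ‖x‖ ^ 2 + C * ‖n‖ ^ 2 := by
  linarith [h x n, pow_le_pow_left₀ (norm_nonneg x) (hx n hn) 2]

theorem UpperParallelogram.norm_add_smul_sq_le (h : UpperParallelogram X C)
    (hx : BirkhoffOrthogonal x N) {m n : X} (hn : n ∈ N) (hmn : m + n = z - x)
    (ht : t ∈ Set.Icc (0 : ℝ) (1 / 2)) :
    ‖x + t • m‖ ^ 2 - ‖z‖ ^ 2 ≤
      (1 - t) * (‖x‖ ^ 2 - ‖z‖ ^ 2) + 2 * C * t ^ 2 * ‖n‖ ^ 2 := by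
  obtain ⟨ht_nonneg, ht_half⟩ := ht
  have h_toward : ‖(1 - 2 * t) • x + (2 * t) • z‖ ^ 2 ≤
      (1 - 2 * t) * ‖x‖ ^ 2 + 2 * t * ‖z‖ ^ 2 :=
    convexOn_univ_norm_sq.2 trivial trivial (by linarith) (by linarith) (by ring)
  have h_orthogonal : ‖x - (2 * t) • n‖ ^ 2 ≤ ‖x‖ ^ 2 + C * (2 * t * ‖n‖) ^ 2 := by
    have := h.norm_sub_sq_le hx (N.smul_mem (2 * t) hn)
    rwa [norm_smul_of_nonneg (by linarith)] at this
  have h_midpoint : ‖x + t • m‖ ^ 2 ≤ (1 / 2) * ‖(1 - 2 * t) • x + (2 * t) • z‖ ^ 2 +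
      (1 / 2) * ‖x - (2 * t) • n‖ ^ 2 := by
    obtain rfl : m = z - x - n := eq_sub_of_add_eq hmn
    have h_eq : x + t • (z - x - n) = (1 / 2 : ℝ) • ((1 - 2 * t) • x + (2 * t) • z) +
        (1 / 2 : ℝ) • (x - (2 * t) • n) := by module
    rw [h_eq]
    exact convexOn_univ_norm_sq.2 trivial trivial (by norm_num) (by norm_num) (by norm_num)
  linarith

theorem IsResidual.norm_sq_sub_le (hk : 0 < k) (hC : 0 ≤ C) (hlow : LowerParallelogram X k)
    (hup : UpperParallelogram X C) (hMN : BoundedDecomposition M N K)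
    (hz : IsResidual (M ⊔ N) x z) (hx : BirkhoffOrthogonal x N) (hx' : IsResidual M x x')
    (ht : t ∈ Set.Icc (0 : ℝ) (1 / 2)) :
    ‖x'‖ ^ 2 - ‖z‖ ^ 2 ≤ (1 - t + 4 * C * K ^ 2 / k * t ^ 2) * (‖x‖ ^ 2 - ‖z‖ ^ 2) := by
  obtain ⟨m, hm, n, hn, hmn, -, hnK⟩ := hMN _ hz.sub_mem
  have h_dist : ‖z - x‖ ^ 2 ≤ 2 * (‖x‖ ^ 2 - ‖z‖ ^ 2) / k :=
    (le_div_iff₀' hk).2 (hlow.mul_norm_sub_sq_le_of_isResidual hz)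
  have h_summand : ‖n‖ ^ 2 ≤ K ^ 2 * (2 * (‖x‖ ^ 2 - ‖z‖ ^ 2) / k) :=
    calc ‖n‖ ^ 2 ≤ (K * ‖z - x‖) ^ 2 := by gcongr
      _ = K ^ 2 * ‖z - x‖ ^ 2 := mul_pow _ _ _
      _ ≤ K ^ 2 * (2 * (‖x‖ ^ 2 - ‖z‖ ^ 2) / k) := by gcongr
  calc ‖x'‖ ^ 2 - ‖z‖ ^ 2 ≤ ‖x + t • m‖ ^ 2 - ‖z‖ ^ 2 := by
        gcongr; exact hx'.norm_le_norm_add (M.smul_mem t hm)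
    _ ≤ (1 - t) * (‖x‖ ^ 2 - ‖z‖ ^ 2) + 2 * C * t ^ 2 * ‖n‖ ^ 2 :=
        hup.norm_add_smul_sq_le hx hn hmn ht
    _ ≤ (1 - t) * (‖x‖ ^ 2 - ‖z‖ ^ 2) +
          2 * C * t ^ 2 * (K ^ 2 * (2 * (‖x‖ ^ 2 - ‖z‖ ^ 2) / k)) := by gcongr
    _ = (1 - t + 4 * C * K ^ 2 / k * t ^ 2) * (‖x‖ ^ 2 - ‖z‖ ^ 2) := by ring

theorem exists_one_sub_add_mul_sq_mem_Ioo {B : ℝ} (hB : 0 ≤ B) :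
    ∃ t ∈ Set.Icc (0 : ℝ) (1 / 2), 1 - t + B * t ^ 2 ∈ Set.Ioo (0 : ℝ) 1 := by
  have h_pos : 0 < 2 * (1 + B) := by linarith
  set t := 1 / (2 * (1 + B)) with ht_def
  have ht_pos : 0 < t := by positivity
  have ht_half : t ≤ 1 / 2 := one_div_le_one_div_of_le two_pos (by linarith)
  have hBt : B * t ≤ 1 / 2 := by
    rw [ht_def, mul_one_div, div_le_div_iff₀ h_pos two_pos]
    linarith
  exact ⟨t, ⟨ht_pos.le, ht_half⟩, by nlinarith [sq_nonneg t], by nlinarith⟩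

end Contraction

section LinearConvergence

theorem exists_le_mul_pow_of_sq_le {d e : ℕ → ℝ} {q : ℝ} (hq : q ∈ Set.Ioo (0 : ℝ) 1)
    (hde : ∀ n, d n ^ 2 ≤ e n) (he : ∀ n, e (n + 2) ≤ q * e (n + 1)) :
    ∃ C > 0, ∃ r ∈ Set.Ioo (0 : ℝ) 1, ∀ n, d n ≤ C * r ^ n := by
  obtain ⟨hq_pos, hq_lt⟩ := hq
  set E := max (e 0) (e 1 / q)
  have hE : 0 ≤ E := ((sq_nonneg _).trans (hde 0)).trans (le_max_left _ _)
  have he_geom : ∀ n, e n ≤ E * q ^ n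
    | 0 => by simp only [pow_zero, mul_one]; exact le_max_left _ _
    | n + 1 =>
      calc e (n + 1) ≤ q ^ n * e 1 :=
            le_geom (u := fun n => e (n + 1)) hq_pos.le n fun j _ => he j
        _ ≤ q ^ n * (E * q) := by
            gcongr; exact (div_le_iff₀ hq_pos).1 (le_max_right _ _)
        _ = E * q ^ (n + 1) := by ring
  refine ⟨√E + 1, by positivity, √q, ⟨Real.sqrt_pos.2 hq_pos, ?_⟩, fun n => ?_⟩
  · rwa [Real.sqrt_lt' one_pos, one_pow]
  have h_sq : d n ^ 2 ≤ (√E * √q ^ n) ^ 2 := by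
    rw [mul_pow, pow_right_comm, Real.sq_sqrt hE, Real.sq_sqrt hq_pos.le]
    exact (hde n).trans (he_geom n)
  calc d n ≤ √E * √q ^ n := (abs_le_of_sq_le_sq' h_sq (by positivity)).2
    _ ≤ (√E + 1) * √q ^ n := by gcongr; linarith

theorem tendsto_of_forall_norm_sub_le_mul_pow {E : Type*} [SeminormedAddCommGroup E] {x : ℕ → E}
    {z : E} {C q : ℝ} (hq : q ∈ Set.Ico (0 : ℝ) 1) (h : ∀ n, ‖z - x n‖ ≤ C * q ^ n) :
    Tendsto x atTop (𝓝 z) := by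
  refine tendsto_iff_norm_sub_tendsto_zero.2 (squeeze_zero (fun _ => norm_nonneg _)
    (fun n => norm_sub_rev (x n) z ▸ h n) ?_)
  simpa only [mul_zero] using (tendsto_pow_atTop_nhds_zero_of_lt_one hq.1 hq.2).const_mul C

theorem exists_norm_sub_le_mul_pow_of_isResidual {k C K : ℝ} (hk : 0 < k) (hC : 0 ≤ C)
    (hlow : LowerParallelogram X k) (hup : UpperParallelogram X C) {S : Submodule ℝ X}
    {L : ℕ → Submodule ℝ X} (hL_sup : ∀ n, L (n + 1) ⊔ L n = S)
    (hL : ∀ n, BoundedDecomposition (L (n + 1)) (L n) K) {x : ℕ → X} {z : X}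
    (hz : IsResidual S (x 0) z) (hx : ∀ n, IsResidual (L n) (x n) (x (n + 1))) :
    ∃ A > 0, ∃ q ∈ Set.Ioo (0 : ℝ) 1, ∀ n, ‖z - x n‖ ≤ A * q ^ n := by
  have hL_le (n : ℕ) : L n ≤ S := hL_sup n ▸ le_sup_right
  have hz_all (n : ℕ) : IsResidual S (x n) z := by
    induction n with
    | zero => exact hz
    | succ n ih => exact ih.of_sub_mem (hL_le n (hx n).sub_mem)
  obtain ⟨t, ht, hq⟩ := exists_one_sub_add_mul_sq_mem_Ioo (B := 4 * C * K ^ 2 / k) (by positivity)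
  refine exists_le_mul_pow_of_sq_le (e := fun n => 2 / k * (‖x n‖ ^ 2 - ‖z‖ ^ 2)) hq
    (fun n => ?_) fun n => ?_
  · rw [div_mul_eq_mul_div, le_div_iff₀' hk]
    exact hlow.mul_norm_sub_sq_le_of_isResidual (hz_all n)
  · have h_step := IsResidual.norm_sq_sub_le hk hC hlow hup (hL n)
      ((hL_sup n).symm ▸ hz_all (n + 1)) (hx n).birkhoffOrthogonal (hx (n + 1)) ht
    rw [mul_left_comm]
    gcongr

end LinearConvergence

theorem statement18_general {X : Type*} [NormedAddCommGroup X] [NormedSpace ℝ X]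
    (hconv : PowerConvex X 2) (hsmooth : PowerSmooth X 2)
    (M N : Submodule ℝ X) (hM : IsComplete (M : Set X)) (hN : IsComplete (N : Set X))
    (hMN : IsComplete ((M ⊔ N : Submodule ℝ X) : Set X))
    (a : X) (x : ℕ → X) (hx0 : x 0 = a)
    (hodd : ∀ n : ℕ, x (2 * n + 1) = x (2 * n) - metricProj (M : Set X) (x (2 * n)))
    (heven : ∀ n : ℕ, x (2 * n + 2) = x (2 * n + 1) - metricProj (N : Set X) (x (2 * n + 1))) :
    Filter.Tendsto x Filter.atTop
      (𝓝 (a - metricProj ((M ⊔ N : Submodule ℝ X) : Set X) a)) ∧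
    ∃ C > (0 : ℝ), ∃ q ∈ Set.Ioo (0 : ℝ) 1, ∀ n : ℕ,
      ‖(a - metricProj ((M ⊔ N : Submodule ℝ X) : Set X) a) - x n‖ ≤ C * q ^ n := by
  obtain ⟨k, hk, hlow⟩ := hconv.exists_lowerParallelogram
  obtain ⟨C, hC, hup⟩ := hsmooth.exists_upperParallelogram
  obtain ⟨K, hK⟩ := exists_boundedDecomposition hM hN hMN
  let L (n : ℕ) : Submodule ℝ X := if Even n then M else N
  have hL_even (j : ℕ) : L (2 * j) = M := if_pos (even_two_mul j)
  have hL_odd (j : ℕ) : L (2 * j + 1) = N := if_neg (Nat.not_even_two_mul_add_one j)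
  have hL_pair (n : ℕ) : L (n + 1) ⊔ L n = M ⊔ N ∧ BoundedDecomposition (L (n + 1)) (L n) K := by
    obtain ⟨j, rfl | rfl⟩ := n.even_or_odd'
    · rw [hL_even, hL_odd]; exact ⟨sup_comm N M, hK.symm⟩
    · rw [hL_odd, show 2 * j + 1 + 1 = 2 * (j + 1) by ring, hL_even]; exact ⟨rfl, hK⟩
  have hx (n : ℕ) : IsResidual (L n) (x n) (x (n + 1)) := by
    obtain ⟨j, rfl | rfl⟩ := n.even_or_odd'
    · rw [hL_even, hodd]; exact hlow.isResidual_sub_metricProj hk hM _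
    · rw [hL_odd, heven]; exact hlow.isResidual_sub_metricProj hk hN _
  have hz : IsResidual (M ⊔ N) (x 0) (a - metricProj ((M ⊔ N : Submodule ℝ X) : Set X) a) :=
    hx0 ▸ hlow.isResidual_sub_metricProj hk hMN a
  obtain ⟨A, hA, q, hq, h_rate⟩ := exists_norm_sub_le_mul_pow_of_isResidual hk hC hlow hup
    (fun n => (hL_pair n).1) (fun n => (hL_pair n).2) hz hx
  exact ⟨tendsto_of_forall_norm_sub_le_mul_pow ⟨hq.1.le, hq.2⟩ h_rate, A, hA, q, hq, h_rate⟩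

theorem statement18 {X : Type*} [NormedAddCommGroup X] [NormedSpace ℝ X] [CompleteSpace X]
    (hconv : PowerConvex X 2) (hsmooth : PowerSmooth X 2)
    (M N : Submodule ℝ X) (hM : IsClosed (M : Set X)) (hN : IsClosed (N : Set X))
    (hMN : IsClosed ((M ⊔ N : Submodule ℝ X) : Set X))
    (a : X) (x : ℕ → X) (hx0 : x 0 = a)
    (hodd : ∀ n : ℕ, x (2 * n + 1) = x (2 * n) - metricProj (M : Set X) (x (2 * n)))
    (heven : ∀ n : ℕ, x (2 * n + 2) = x (2 * n + 1) - metricProj (N : Set X) (x (2 * n + 1))) :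
    Filter.Tendsto x Filter.atTop
      (𝓝 (a - metricProj ((M ⊔ N : Submodule ℝ X) : Set X) a)) ∧
    ∃ C > (0 : ℝ), ∃ q ∈ Set.Ioo (0 : ℝ) 1, ∀ n : ℕ,
      ‖(a - metricProj ((M ⊔ N : Submodule ℝ X) : Set X) a) - x n‖ ≤ C * q ^ n :=
  statement18_general hconv hsmooth M N hM.isComplete hN.isComplete hMN.isComplete a x hx0
    hodd heven
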